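/- Let f : ℝ^d → ℝ be a real analytic function which is not identically zero, and let V = {x ∈ ℝ^d : f(x) = 0}. Then for each point x₀ ∈ V there exists an open neighbourhood Ω of x₀ and sets M₀, M₁, …, M_{d−1} ⊆ ℝ^d (some possibly empty) with V ∩ Ω = M₀ ∪ M₁ ∪ ⋯ ∪ M_{d−1}, such that for each d' ∈ {0,…,d−1} and each point x ∈ M_{d'} the following local real analytic parametrisation holds: there exist an open neighbourhood U of x in ℝ^d, an open neighbourhood W of 0 in ℝ^{d'} × ℝ^{d−d'}, and a map φ : W → ℝ^d which is real analytic and a homeomorphism from W onto U, such that M_{d'} ∩ U = { φ(τ, 0) : τ ∈ ℝ^{d'} with (τ, 0) ∈ W }. -/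

import Mathlib

/-!
The proof is by induction on the dimension, for finite families of analytic germs, and produces a
stratification: an upper semicontinuous function `σ` whose level sets `{σ = k}` are analytic
submanifolds of codimension `k` and on which each function of the family vanishes locally or not
at all. Let `F` be the product of the nonzero germs of the family on `E × ℝ`. After a linear change
of coordinates `F` does not vanish identically on the last axis, so by Weierstrass preparation the
functions have the zeros of monic polynomials in the last variable with coefficients analytic on
`E`. The subdiscriminants of such a polynomial detect its number of distinct complex roots, and
where this number is constant the squarefree part is, up to a nonvanishing factor, again analytic
in the coefficients and has only simple roots. Over each stratum of a stratification of `E` adapted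
to the subdiscriminants the zero set of `F` is therefore locally empty or the graph of an analytic
function, and splitting the preimage of the stratum into `{F = 0}` and `{F ≠ 0}` gives the
stratification of `E × ℝ`.

The division theorem behind Weierstrass preparation comes from the inverse function theorem: the
coefficients of `f (x, ·)` form an analytic function of `x` with values in the bounded sequences,
and the map `(a, v) ↦ ∑ i < m, aᵢ z^i v + z^m v` has invertible derivative at `(0, u)` when `u` is
a unit.
-/

namespace Lojasiewicz

open Filter Topology
open scoped BoundedContinuousFunction

section Germs

variable {E : Type*} [NormedAddCommGroup E] [NormedSpace ℝ E] {f g : E → ℝ} {x₀ : E}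

lemma eventually_frequently_ne_zero (hf : AnalyticAt ℝ f x₀) (hne : ∃ᶠ x in 𝓝 x₀, f x ≠ 0) :
    ∀ᶠ x in 𝓝 x₀, ∃ᶠ y in 𝓝 x, f y ≠ 0 := by
  obtain ⟨r, hr, hball⟩ := hf.exists_ball_analyticOnNhd
  filter_upwards [Metric.ball_mem_nhds x₀ hr] with x hx
  by_contra hzero
  refine hne ?_
  filter_upwards [Metric.ball_mem_nhds x₀ hr] with y hy
  simpa using hball.eqOn_zero_of_preconnected_of_eventuallyEq_zero
    (convex_ball x₀ r).isPreconnected hx (by simpa [EventuallyEq] using hzero) hy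

lemma frequently_mul_ne_zero (hf : AnalyticAt ℝ f x₀) (hg : AnalyticAt ℝ g x₀)
    (hf₀ : ∃ᶠ x in 𝓝 x₀, f x ≠ 0) (hg₀ : ∃ᶠ x in 𝓝 x₀, g x ≠ 0) :
    ∃ᶠ x in 𝓝 x₀, f x * g x ≠ 0 := by
  refine frequently_frequently_nhds.1 ?_
  refine (hf₀.and_eventually (hf.eventually_analyticAt.and
    (eventually_frequently_ne_zero hg hg₀))).mono ?_
  rintro x ⟨hfx, hfa, hgx⟩
  exact (hgx.and_eventually (hfa.continuousAt.eventually_ne hfx)).mono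
    fun y hy ↦ mul_ne_zero hy.2 hy.1

lemma frequently_prod_ne_zero {ι : Type*} {f : ι → E → ℝ} (s : Finset ι)
    (hf : ∀ i, AnalyticAt ℝ (f i) x₀) (hne : ∀ i, ∃ᶠ x in 𝓝 x₀, f i x ≠ 0) :
    ∃ᶠ x in 𝓝 x₀, ∏ i ∈ s, f i x ≠ 0 := by
  induction s using Finset.cons_induction with
  | empty => simpa only [Finset.prod_empty, ne_eq, one_ne_zero, not_false_eq_true] using
      Eventually.frequently (.of_forall fun _ ↦ trivial)
  | cons i s hi ih =>
    simp only [Finset.prod_cons]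
    exact frequently_mul_ne_zero (hf i) (s.analyticAt_fun_prod fun j _ ↦ hf j) (hne i) ih

lemma exists_frequently_smul_ne_zero [Nontrivial E] (hf : AnalyticAt ℝ f 0)
    (hne : ∃ᶠ x in 𝓝 0, f x ≠ 0) : ∃ p : E, p ≠ 0 ∧ ∃ᶠ t in 𝓝 (0 : ℝ), f (t • p) ≠ 0 := by
  obtain ⟨r, hr, hball⟩ := hf.exists_ball_analyticOnNhd
  obtain ⟨x, hfx, hx⟩ := (hne.and_eventually (Metric.ball_mem_nhds 0 hr)).exists
  let U : Set ℝ := (fun t : ℝ ↦ t • x) ⁻¹' Metric.ball 0 r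
  have hU : IsPreconnected U :=
    ((convex_ball 0 r).is_linear_preimage (IsLinearMap.isLinearMap_smul' x)).isPreconnected
  have hline : AnalyticOnNhd ℝ (fun t : ℝ ↦ f (t • x)) U := fun t ht ↦
    AnalyticAt.fun_comp (g := f) (hball _ ht) (analyticAt_id.smul analyticAt_const)
  have hfreq : ∃ᶠ t in 𝓝 (0 : ℝ), f (t • x) ≠ 0 := by
    intro hzero
    refine hfx ?_
    simpa using hline.eqOn_zero_of_preconnected_of_eventuallyEq_zero hU (z₀ := 0)
      (by simp [U, hr])
      (by simpa [EventuallyEq] using hzero)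
      (show (1 : ℝ) ∈ U by simpa [U] using hx)
  by_cases hx0 : x = 0
  · obtain ⟨p, hp⟩ := exists_ne (0 : E)
    refine ⟨p, hp, Eventually.frequently ?_⟩
    have hcont : ContinuousAt (fun t : ℝ ↦ f (t • p)) 0 :=
      ContinuousAt.comp' (g := f) (by simpa using hf.continuousAt) (by fun_prop)
    exact hcont.eventually_ne (by simpa [hx0] using hfx)
  · exact ⟨x, hx0, hfreq⟩

end Germs

section InverseFunction

variable {X Y : Type*} [NormedAddCommGroup X] [NormedSpace ℝ X] [CompleteSpace X]
  [NormedAddCommGroup Y] [NormedSpace ℝ Y] [CompleteSpace Y]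

lemma exists_openPartialHomeomorph_analyticAt_symm {Φ : X → Y} {p : X} (hΦ : AnalyticAt ℝ Φ p)
    (hbij : Function.Bijective (fderiv ℝ Φ p)) :
    ∃ Θ : OpenPartialHomeomorph X Y, p ∈ Θ.source ∧ ⇑Θ = Φ ∧ AnalyticAt ℝ Θ.symm (Φ p) := by
  let L : X ≃L[ℝ] Y := .ofBijective (fderiv ℝ Φ p)
    (LinearMap.ker_eq_bot.2 hbij.1) (LinearMap.range_eq_top.2 hbij.2)
  have hL : fderiv ℝ Φ p = (L : X →L[ℝ] Y) := rfl
  have hstrict : HasStrictFDerivAt Φ (L : X →L[ℝ] Y) p := hL ▸ hΦ.hasStrictFDerivAt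
  let Θ := hstrict.toOpenPartialHomeomorph Φ
  have hp : p ∈ Θ.source := hstrict.mem_toOpenPartialHomeomorph_source
  exact ⟨Θ, hp, rfl, Θ.analyticAt_symm' (i := L) hp hΦ hL⟩

end InverseFunction

/-! ### Weierstrass preparation -/

section Division

variable {B : Type*} [NormedAddCommGroup B] [NormedSpace ℝ B] {T : B →L[ℝ] B} {u : B} {m : ℕ}

/-- The derivative at `(0, u)` of the map `(a, v) ↦ ∑ i, aᵢ T^i v + T^m v`; for `T` the
multiplication by a variable `t` and `u` a unit, this is the division of power series by `t^m`. -/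
noncomputable def divisionMap (T : B →L[ℝ] B) (u : B) (m : ℕ) : (Fin m → ℝ) × B →L[ℝ] B :=
  ∑ i : Fin m, (ContinuousLinearMap.smulRight (.proj i) ((T ^ (i : ℕ)) u)) ∘L .fst ℝ _ B +
    (T ^ m) ∘L .snd ℝ _ B

lemma divisionMap_apply (p : (Fin m → ℝ) × B) :
    divisionMap T u m p = ∑ i : Fin m, p.1 i • (T ^ (i : ℕ)) u + (T ^ m) p.2 := by
  simp [divisionMap]

lemma divisionMap_succ (p : (Fin (m + 1) → ℝ) × B) :
    divisionMap T u (m + 1) p = p.1 0 • u + T (divisionMap T u m (Fin.tail p.1, p.2)) := by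
  simp only [divisionMap_apply, Fin.sum_univ_succ, Fin.tail, Fin.val_zero, Fin.val_succ, pow_zero,
    pow_succ', map_add, map_sum, map_smul, one_apply_eq_self,
    mul_apply_eq_comp, add_assoc]

lemma bijective_divisionMap (hT : Function.Bijective fun p : ℝ × B ↦ p.1 • u + T p.2) (m : ℕ) :
    Function.Bijective (divisionMap T u m) := by
  induction m with
  | zero =>
    have hsnd : ⇑(divisionMap T u 0) = Prod.snd := by ext p; simp [divisionMap_apply]
    exact hsnd ▸ (Equiv.uniqueProd B (Fin 0 → ℝ)).bijective
  | succ m ih =>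
    let e : (Fin (m + 1) → ℝ) × B ≃ ℝ × ((Fin m → ℝ) × B) :=
      ((Fin.consEquiv fun _ ↦ ℝ).symm.prodCongr (.refl B)).trans (.prodAssoc _ _ _)
    have hcomp : ⇑(divisionMap T u (m + 1)) =
        (fun p : ℝ × B ↦ p.1 • u + T p.2) ∘ Prod.map id (divisionMap T u m) ∘ e :=
      funext divisionMap_succ
    exact hcomp ▸ hT.comp ((Function.bijective_id.prodMap ih).comp e.bijective)

lemma hasFDerivAt_divisionMap :
    HasFDerivAt (fun p : (Fin m → ℝ) × B ↦ divisionMap T p.2 m p) (divisionMap T u m) (0, u) := by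
  have hterm (i : Fin m) := ((ContinuousLinearMap.proj (R := ℝ) (φ := fun _ : Fin m ↦ ℝ) i ∘L
      .fst ℝ (Fin m → ℝ) B).hasFDerivAt (x := (0, u))).smul
    (((T ^ (i : ℕ)) ∘L .snd ℝ (Fin m → ℝ) B).hasFDerivAt (x := (0, u)))
  have hsum := (HasFDerivAt.fun_sum fun i (_ : i ∈ Finset.univ) ↦ hterm i).add
    (((T ^ m) ∘L .snd ℝ (Fin m → ℝ) B).hasFDerivAt (x := (0, u)))
  refine (hsum.congr_fderiv ?_).congr_of_eventuallyEq (.of_forall fun p ↦ ?_)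
  · ext p <;> simp [divisionMap_apply]
  · simp [divisionMap_apply]

lemma exists_analyticAt_division [CompleteSpace B] {E : Type*} [NormedAddCommGroup E]
    [NormedSpace ℝ E] {g : E → B} {x₀ : E} (hg : AnalyticAt ℝ g x₀)
    (hT : Function.Bijective fun p : ℝ × B ↦ p.1 • u + T p.2) (hx₀ : g x₀ = (T ^ m) u) :
    ∃ (a : E → Fin m → ℝ) (v : E → B), AnalyticAt ℝ a x₀ ∧ AnalyticAt ℝ v x₀ ∧ v x₀ = u ∧
      ∀ᶠ x in 𝓝 x₀, g x = ∑ i : Fin m, a x i • (T ^ (i : ℕ)) (v x) + (T ^ m) (v x) := by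
  let Φ : (Fin m → ℝ) × B → B := fun p ↦ divisionMap T p.2 m p
  have hΦ : AnalyticAt ℝ Φ (0, u) := by
    simp only [Φ, divisionMap_apply]
    have hpow (i : ℕ) : AnalyticAt ℝ (fun p : (Fin m → ℝ) × B ↦ (T ^ i) p.2) (0, u) :=
      ((T ^ i) ∘L .snd ℝ (Fin m → ℝ) B).analyticAt _
    have hcoord (i : Fin m) : AnalyticAt ℝ (fun p : (Fin m → ℝ) × B ↦ p.1 i) (0, u) :=
      (ContinuousLinearMap.proj (R := ℝ) (φ := fun _ ↦ ℝ) i ∘L .fst ℝ _ B).analyticAt _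
    exact (Finset.univ.analyticAt_fun_sum fun i _ ↦ (hcoord i).smul (hpow i)).add (hpow m)
  have hΦu : Φ (0, u) = g x₀ := by simp [Φ, divisionMap_apply, hx₀]
  have hderiv : fderiv ℝ Φ (0, u) = divisionMap T u m := hasFDerivAt_divisionMap.fderiv
  obtain ⟨Θ, huΘ, hΘ, hsymm⟩ := exists_openPartialHomeomorph_analyticAt_symm hΦ
    (hderiv ▸ bijective_divisionMap hT m)
  have hψ : AnalyticAt ℝ (Θ.symm ∘ g) x₀ := (hΦu ▸ hsymm).comp hg
  have hψ₀ : (Θ.symm ∘ g) x₀ = (0, u) := by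
    rw [Function.comp_apply, ← hΦu, ← hΘ, Θ.left_inv huΘ]
  refine ⟨fun x ↦ (Θ.symm (g x)).1, fun x ↦ (Θ.symm (g x)).2, analyticAt_fst.comp hψ,
    analyticAt_snd.comp hψ, congrArg Prod.snd hψ₀, ?_⟩
  have htarget : g x₀ ∈ Θ.target := by simpa only [hΘ, hΦu] using Θ.map_source huΘ
  filter_upwards [hg.continuousAt.eventually_mem (Θ.open_target.mem_nhds htarget)] with x hx
  rw [← divisionMap_apply (u := (Θ.symm (g x)).2)]
  exact (Θ.right_inv hx).symm.trans (congrFun hΘ _)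

end Division

section BoundedSequences

/-- The shift of bounded sequences, that is, multiplication by the variable if `b` is regarded as
the power series `∑ bₙ zⁿ`. -/
noncomputable def shift : (ℕ →ᵇ ℝ) →L[ℝ] (ℕ →ᵇ ℝ) :=
  LinearMap.mkContinuous
    { toFun b := .ofNormedAddCommGroupDiscrete (fun n ↦ Nat.casesOn n 0 b) ‖b‖
        fun n ↦ n.casesOn (by simp) b.norm_coe_le_norm
      map_add' b c := by ext (_ | n) <;> simp
      map_smul' c b := by ext (_ | n) <;> simp } 1 fun b ↦ by
    rw [one_mul, BoundedContinuousFunction.norm_le (norm_nonneg _)]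
    exact fun n ↦ n.casesOn (by simp) b.norm_coe_le_norm

lemma shift_apply_zero (b : ℕ →ᵇ ℝ) : shift b 0 = 0 := rfl

lemma shift_apply_succ (b : ℕ →ᵇ ℝ) (n : ℕ) : shift b (n + 1) = b n := rfl

lemma exists_shift_eq {b : ℕ →ᵇ ℝ} (hb : b 0 = 0) :
    ∃ c : ℕ →ᵇ ℝ, shift c = b ∧ ∀ n, c n = b (n + 1) := by
  refine ⟨.ofNormedAddCommGroupDiscrete (fun n ↦ b (n + 1)) ‖b‖ fun n ↦ b.norm_coe_le_norm _, ?_,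
    fun _ ↦ rfl⟩
  ext (_ | n)
  exacts [hb.symm, rfl]

variable {ε : ℝ}

lemma exists_smul_shift_pow_eq (hε : ε ≠ 0) {b : ℕ →ᵇ ℝ} {n : ℕ} (hn : b n ≠ 0) :
    ∃ (m : ℕ) (u : ℕ →ᵇ ℝ), u 0 ≠ 0 ∧ b = ((ε • shift) ^ m) u := by
  induction n generalizing b with
  | zero => exact ⟨0, b, hn, rfl⟩
  | succ n ih =>
    by_cases hb₀ : b 0 = 0
    · obtain ⟨c, hc, hcb⟩ := exists_shift_eq hb₀
      have hcn : (ε⁻¹ • c) n ≠ 0 := by simpa [hcb, hε] using hn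
      obtain ⟨m, u, hu, hmu⟩ := ih hcn
      refine ⟨m + 1, u, hu, ?_⟩
      rw [pow_succ', mul_apply_eq_comp, ← hmu, smul_apply, map_smul,
        hc, smul_inv_smul₀ hε]
    · exact ⟨0, b, hb₀, rfl⟩

lemma bijective_smul_add_shift (hε : ε ≠ 0) {u : ℕ →ᵇ ℝ} (hu : u 0 ≠ 0) :
    Function.Bijective fun p : ℝ × (ℕ →ᵇ ℝ) ↦ p.1 • u + (ε • shift) p.2 := by
  refine ⟨fun p q hpq ↦ ?_, fun w ↦ ?_⟩
  · have hpq (n : ℕ) := DFunLike.congr_fun hpq n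
    have hfst : p.1 = q.1 := by
      simpa [shift_apply_zero, hu] using hpq 0
    refine Prod.ext hfst (BoundedContinuousFunction.ext fun n ↦ ?_)
    simpa [hfst, shift_apply_succ, hε] using hpq (n + 1)
  · obtain ⟨c, hc, -⟩ := exists_shift_eq (b := w - (w 0 / u 0) • u) (by simp [hu])
    exact ⟨(w 0 / u 0, ε⁻¹ • c), by simp [hc, hε]⟩

lemma exists_linearMap_hasSum {z : ℝ} (hz : |z| < 1) :
    ∃ e : (ℕ →ᵇ ℝ) →ₗ[ℝ] ℝ, ∀ b, HasSum (fun n ↦ b n * z ^ n) (e b) := by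
  have hsum (b : ℕ →ᵇ ℝ) : Summable fun n ↦ b n * z ^ n := by
    have hgeom := (summable_geometric_of_abs_lt_one (by rwa [abs_abs])).mul_left ‖b‖
    refine .of_norm_bounded hgeom fun n ↦ ?_
    rw [norm_mul, norm_pow, Real.norm_eq_abs z]
    gcongr
    exact b.norm_coe_le_norm n
  exact ⟨{  toFun b := ∑' n, b n * z ^ n
            map_add' b c := by
              simpa [add_mul] using (hsum b).tsum_add (hsum c)
            map_smul' c b := by
              simpa [mul_assoc] using (hsum b).tsum_mul_left c }, fun b ↦ (hsum b).hasSum⟩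

variable {z : ℝ} {e : (ℕ →ᵇ ℝ) →ₗ[ℝ] ℝ}

lemma eval_shift (he : ∀ b, HasSum (fun n ↦ b n * z ^ n) (e b)) (b : ℕ →ᵇ ℝ) :
    e (shift b) = z * e b := by
  refine (he _).unique ?_
  rw [← hasSum_nat_add_iff' 1]
  simpa [shift_apply_zero, shift_apply_succ, pow_succ', mul_left_comm] using (he b).mul_left z

lemma abs_eval_sub_le (hz : |z| ≤ 1 / 2) (he : ∀ b, HasSum (fun n ↦ b n * z ^ n) (e b))
    (b : ℕ →ᵇ ℝ) : |e b - b 0| ≤ 2 * |z| * ‖b‖ := by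
  have htail := (hasSum_nat_add_iff' 1).2 (he b)
  have hgeom : HasSum (fun n : ℕ ↦ |z| * ‖b‖ * (1 / 2) ^ n) (2 * |z| * ‖b‖) := by
    have hgeom := hasSum_geometric_two.mul_left (|z| * ‖b‖)
    rwa [show |z| * ‖b‖ * 2 = 2 * |z| * ‖b‖ by ring] at hgeom
  have hterm (n : ℕ) : ‖b (n + 1) * z ^ (n + 1)‖ ≤ |z| * ‖b‖ * (1 / 2) ^ n := by
    rw [norm_mul, norm_pow, Real.norm_eq_abs z, pow_succ', mul_left_comm, mul_assoc]
    gcongr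
    exact b.norm_coe_le_norm _
  simpa [htail.tsum_eq] using tsum_of_norm_bounded hgeom hterm

lemma eventually_eval_ne_zero {X : Type*} [TopologicalSpace X] {v : X → ℕ →ᵇ ℝ} {x₀ : X}
    (hv : ContinuousAt v x₀) (hv₀ : v x₀ 0 ≠ 0) (δ : ℝ) :
    ∀ᶠ y in 𝓝 (x₀, (0 : ℝ)), |y.2 / δ| ≤ 1 / 2 ∧ ∀ e : (ℕ →ᵇ ℝ) →ₗ[ℝ] ℝ,
      (∀ b, HasSum (fun n ↦ b n * (y.2 / δ) ^ n) (e b)) → e (v y.1) ≠ 0 := by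
  have hv : ContinuousAt (fun y : X × ℝ ↦ v y.1) (x₀, 0) :=
    ContinuousAt.comp' (g := v) hv continuousAt_fst
  have hz : ContinuousAt (fun y : X × ℝ ↦ |y.2 / δ|) (x₀, 0) := by fun_prop
  have hcoord : ContinuousAt (fun y : X × ℝ ↦ |v y.1 0|) (x₀, 0) :=
    ((BoundedContinuousFunction.evalCLM ℝ 0).continuous.continuousAt.comp hv).abs
  have hsmall : ∀ᶠ y : X × ℝ in 𝓝 (x₀, 0), 2 * |y.2 / δ| * ‖v y.1‖ < |v y.1 0| :=
    ((hz.const_mul 2).mul hv.norm).eventually_lt hcoord (by simpa using hv₀)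
  filter_upwards [hz.tendsto.eventually_le_const (u := 1 / 2) (by simp), hsmall] with y hy hlt
  refine ⟨hy, fun e he h0 ↦ ?_⟩
  have hle := abs_eval_sub_le hy he (v y.1)
  rw [h0, zero_sub, abs_neg] at hle
  exact hle.not_gt hlt

lemma eval_smul_shift_pow {t δ : ℝ} (hδ : δ ≠ 0) {e : (ℕ →ᵇ ℝ) →ₗ[ℝ] ℝ}
    (he : ∀ b, HasSum (fun n ↦ b n * (t / δ) ^ n) (e b)) (i : ℕ) (b : ℕ →ᵇ ℝ) :
    e (((δ • shift) ^ i) b) = t ^ i * e b := by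
  induction i with
  | zero => simp
  | succ i ih =>
    rw [pow_succ', mul_apply_eq_comp, smul_apply, map_smul, eval_shift he, ih, smul_eq_mul,
      ← mul_assoc, mul_div_cancel₀ t hδ, pow_succ', mul_assoc]

end BoundedSequences

section CoefficientSequence

variable {E F : Type*} [NormedAddCommGroup E] [NormedSpace ℝ E]
  [NormedAddCommGroup F] [NormedSpace ℝ F]

lemma exists_multilinear_boundedSequence {l : ℕ}
    {M : ℕ → ContinuousMultilinearMap ℝ (fun _ : Fin l ↦ E) F} {K : ℝ} (hM : ∀ k, ‖M k‖ ≤ K) :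
    ∃ P : ContinuousMultilinearMap ℝ (fun _ : Fin l ↦ E) (ℕ →ᵇ F),
      ‖P‖ ≤ K ∧ ∀ x k, P x k = M k x := by
  have hbound (x : Fin l → E) (k : ℕ) : ‖M k x‖ ≤ K * ∏ i, ‖x i‖ :=
    (M k).le_of_opNorm_le (hM k) x
  have hK : 0 ≤ K := (norm_nonneg _).trans (hM 0)
  let P : MultilinearMap ℝ (fun _ : Fin l ↦ E) (ℕ →ᵇ F) :=
    { toFun x := .ofNormedAddCommGroupDiscrete (fun k ↦ M k x) _ (hbound x)
      map_update_add' x i u v := by ext k; simp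
      map_update_smul' x i c u := by ext k; simp }
  refine ⟨P.mkContinuous K fun x ↦ ?_, P.mkContinuous_norm_le hK _, fun _ _ ↦ rfl⟩
  exact (BoundedContinuousFunction.norm_le (by positivity)).2 (hbound x)

lemma exists_analyticAt_boundedSequence [CompleteSpace F]
    {q : ℕ → FormalMultilinearSeries ℝ E F} {C r : ℝ} (hr : 0 < r)
    (hq : ∀ k l, ‖q k l‖ ≤ C * r ^ l) :
    ∃ g : E → (ℕ →ᵇ F), AnalyticAt ℝ g 0 ∧ ∀ᶠ x in 𝓝 0, ∀ k, g x k = (q k).sum x := by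
  choose P hP hPq using fun l ↦ exists_multilinear_boundedSequence fun k ↦ hq k l
  have hradius : 0 < FormalMultilinearSeries.radius P := by
    refine lt_of_lt_of_le ?_ (FormalMultilinearSeries.le_radius_of_bound (r := r⁻¹.toNNReal) P C
      fun l ↦ ?_)
    · simpa using hr
    · rw [Real.coe_toNNReal _ (by positivity), inv_pow, ← div_eq_mul_inv]
      exact (div_le_iff₀ (by positivity)).2 (hP l)
  have hseries := FormalMultilinearSeries.hasFPowerSeriesOnBall P hradius
  refine ⟨_, hseries.analyticAt, ?_⟩
  filter_upwards [Metric.eball_mem_nhds 0 hradius] with x hx k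
  have hsum := (BoundedContinuousFunction.evalCLM ℝ k).hasSum (hseries.hasSum hx)
  simpa [hPq, FormalMultilinearSeries.sum] using hsum.tsum_eq.symm

lemma norm_changeOriginSeries_le (p : FormalMultilinearSeries ℝ E F) (k l : ℕ) :
    ‖p.changeOriginSeries k l‖ ≤ 2 ^ (k + l) * ‖p (k + l)‖ := by
  have hle : (‖p.changeOriginSeries k l‖₊ : ℝ) ≤ (k + l).choose l * ‖p (k + l)‖ := by
    refine (NNReal.coe_le_coe.2 (p.nnnorm_changeOriginSeries_le_tsum k l)).trans_eq ?_
    simp [tsum_fintype]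
  refine hle.trans ?_
  gcongr
  exact_mod_cast Nat.choose_le_two_pow _ _

lemma hasSum_changeOrigin_apply [CompleteSpace F] {f : E → F} {p : FormalMultilinearSeries ℝ E F}
    {r : ENNReal} (hf : HasFPowerSeriesOnBall f p 0 r) {x y : E} (hxy : ‖x‖ₑ + ‖y‖ₑ < r) {z : ℝ}
    (hz : |z| ≤ 1) : HasSum (fun k ↦ z ^ k • (p.changeOrigin x k fun _ ↦ y)) (f (x + z • y)) := by
  have hmem : z • y ∈ Metric.eball 0 (r - ‖x‖ₑ) := by
    have hzy : ‖z • y‖ₑ ≤ ‖y‖ₑ := enorm_le_iff_norm_le.2 <| by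
      rw [norm_smul]
      exact mul_le_of_le_one_left (norm_nonneg y) hz
    exact mem_eball_zero_iff.2 (hzy.trans_lt (lt_tsub_iff_left.2 hxy))
  have hsum := (hf.changeOrigin (lt_of_le_of_lt le_self_add hxy)).hasSum hmem
  simp only [ContinuousMultilinearMap.map_smul_univ, Finset.prod_const, Finset.card_univ,
    Fintype.card_fin, zero_add] at hsum
  exact hsum

lemma hasSum_changeOriginSeries_apply [CompleteSpace F] (p : FormalMultilinearSeries ℝ E F)
    {x : E} (hx : ‖x‖ₑ < p.radius) (k : ℕ) (y : E) :
    HasSum (fun l ↦ p.changeOriginSeries k l (fun _ ↦ x) fun _ ↦ y)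
      (p.changeOrigin x k fun _ ↦ y) := by
  have hsum := (p.hasFPowerSeriesOnBall_changeOrigin k (pos_of_gt hx)).hasSum
    (mem_eball_zero_iff.2 hx)
  rw [zero_add] at hsum
  exact (ContinuousMultilinearMap.apply ℝ (fun _ : Fin k ↦ E) F fun _ ↦ y).hasSum hsum

lemma norm_changeOriginSeries_apply_le (p : FormalMultilinearSeries ℝ E F) {ρ C : ℝ} (hρ : 0 < ρ)
    (hp : ∀ n, ‖p n‖ * ρ ^ n ≤ C) {y : E} (hy : ‖y‖ ≤ ρ / 2) (k l : ℕ) :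
    ‖(ContinuousMultilinearMap.apply ℝ (fun _ : Fin k ↦ E) F
      fun _ ↦ y).compContinuousMultilinearMap (p.changeOriginSeries k l)‖ ≤ C * (2 / ρ) ^ l := by
  have hC : 0 ≤ C := le_trans (by positivity) (hp 0)
  refine ContinuousMultilinearMap.opNorm_le_bound (by positivity) fun v ↦ ?_
  calc ‖p.changeOriginSeries k l v fun _ ↦ y‖
      ≤ ‖p.changeOriginSeries k l v‖ * (ρ / 2) ^ k := by
        refine (ContinuousMultilinearMap.le_opNorm _ _).trans ?_
        simp only [Finset.prod_const, Finset.card_univ, Fintype.card_fin]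
        gcongr
    _ ≤ 2 ^ (k + l) * ‖p (k + l)‖ * (∏ i, ‖v i‖) * (ρ / 2) ^ k := by
        gcongr
        exact (p.changeOriginSeries k l).le_of_opNorm_le (norm_changeOriginSeries_le p k l) v
    _ = ‖p (k + l)‖ * ρ ^ (k + l) * (2 / ρ) ^ l * ∏ i, ‖v i‖ := by
        simp only [div_pow, pow_add]
        field_simp
    _ ≤ C * (2 / ρ) ^ l * ∏ i, ‖v i‖ := by
        gcongr
        exact hp _

lemma exists_analyticAt_coeffSequence [CompleteSpace F] {f : E → F} (hf : AnalyticAt ℝ f 0) :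
    ∃ δ > 0, ∀ y : E, ‖y‖ ≤ δ → ∃ g : E → (ℕ →ᵇ F), AnalyticAt ℝ g 0 ∧
      ∀ᶠ x in 𝓝 0, ∀ z : ℝ, |z| ≤ 1 → HasSum (fun k ↦ z ^ k • g x k) (f (x + z • y)) := by
  obtain ⟨p, r, hp⟩ := hf
  obtain ⟨ρ, hρ, hρr⟩ := ENNReal.lt_iff_exists_nnreal_btwn.1 hp.r_pos
  have hρ : 0 < (ρ : ℝ) := by exact_mod_cast hρ
  obtain ⟨C, -, hC⟩ := p.norm_mul_pow_le_of_lt_radius (hρr.trans_le hp.r_le)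
  refine ⟨ρ / 2, half_pos hρ, fun y hy ↦ ?_⟩
  obtain ⟨g, hg, hgq⟩ := exists_analyticAt_boundedSequence (C := C) (r := 2 / ρ) (by positivity)
    (norm_changeOriginSeries_apply_le p hρ hC hy)
  refine ⟨g, hg, ?_⟩
  filter_upwards [hgq, Metric.ball_mem_nhds 0 (half_pos hρ)] with x hx hxρ z hz
  have hxy : ‖x‖ₑ + ‖y‖ₑ < r := by
    refine lt_of_le_of_lt ?_ hρr
    rw [mem_ball_zero_iff] at hxρ
    rw [← coe_nnnorm] at hxρ hy
    rw [enorm_eq_nnnorm, enorm_eq_nnnorm]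
    exact_mod_cast (by linarith : (‖x‖₊ + ‖y‖₊ : ℝ) ≤ ρ)
  have hgx (k : ℕ) : g x k = p.changeOrigin x k fun _ ↦ y :=
    (hx k).trans (hasSum_changeOriginSeries_apply p
      ((le_self_add.trans_lt hxy).trans_le hp.r_le) k y).tsum_eq
  simpa only [hgx] using hasSum_changeOrigin_apply hp hxy hz

end CoefficientSequence

section Weierstrass

variable {E : Type*} [NormedAddCommGroup E] [NormedSpace ℝ E] {f : E × ℝ → ℝ}

lemma exists_weierstrass_polynomial (hf : AnalyticAt ℝ f 0) (hne : ∃ᶠ t in 𝓝 0, f (0, t) ≠ 0) :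
    ∃ (m : ℕ) (a : E → Fin m → ℝ), AnalyticAt ℝ a 0 ∧
      ∀ᶠ y in 𝓝 0, (f y = 0 ↔ ∑ i, a y.1 i * y.2 ^ (i : ℕ) + y.2 ^ m = 0) := by
  obtain ⟨δ, hδ, hcoeff⟩ := exists_analyticAt_coeffSequence hf
  obtain ⟨g₀, hg₀, hfg₀⟩ := hcoeff (0, δ) (by simp [abs_of_pos hδ, hδ.le])
  let g : E → ℕ →ᵇ ℝ := fun x ↦ g₀ (x, 0)
  have hg : AnalyticAt ℝ g 0 :=
    AnalyticAt.fun_comp (g := g₀) hg₀ (analyticAt_id.prod analyticAt_const)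
  have hinl : Tendsto (fun x : E ↦ (x, (0 : ℝ))) (𝓝 0) (𝓝 0) :=
    Continuous.tendsto' (by fun_prop) _ _ rfl
  have hfg : ∀ᶠ x in 𝓝 0, ∀ t, |t / δ| ≤ 1 →
      HasSum (fun k ↦ g x k * (t / δ) ^ k) (f (x, t)) := by
    filter_upwards [hinl.eventually hfg₀] with x hx t ht
    simpa [g, mul_comm, mul_div_cancel₀ t hδ.ne'] using hx (t / δ) ht
  obtain ⟨k, hk⟩ : ∃ k, g 0 k ≠ 0 := by
    have hsmall : ∀ᶠ t : ℝ in 𝓝 0, |t / δ| ≤ 1 :=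
      (by fun_prop : Continuous fun t : ℝ ↦ |t / δ|).tendsto 0 |>.eventually_le_const (by simp)
    obtain ⟨t, ht, htδ⟩ := (hne.and_eventually hsmall).exists
    contrapose! ht
    refine (hfg.self_of_nhds t htδ).unique ?_
    simp [ht]
  obtain ⟨m, u, hu, hgu⟩ := exists_smul_shift_pow_eq hδ.ne' hk
  obtain ⟨a, v, ha, hv, hvu, hgav⟩ := exists_analyticAt_division hg
    (bijective_smul_add_shift hδ.ne' hu) hgu
  refine ⟨m, a, ha, ?_⟩
  filter_upwards [continuousAt_fst.eventually hfg, continuousAt_fst.eventually hgav,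
    eventually_eval_ne_zero hv.continuousAt (hvu ▸ hu) δ] with y hfgy hgavy ⟨hy, hne⟩
  obtain ⟨e, he⟩ := exists_linearMap_hasSum (z := y.2 / δ) (by linarith)
  have hfactor : f y = (∑ i, a y.1 i * y.2 ^ (i : ℕ) + y.2 ^ m) * e (v y.1) := by
    rw [(hfgy y.2 (by linarith)).unique (he (g y.1)), hgavy]
    simp only [map_add, map_sum, map_smul, eval_smul_shift_pow hδ.ne' he, smul_eq_mul, add_mul,
      Finset.sum_mul, mul_assoc]
  rw [hfactor, mul_eq_zero, or_iff_left (hne e he)]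

end Weierstrass

/-! ### Subdiscriminants and squarefree parts -/

section Images

open Finset

variable {ι A : Type*} [Fintype ι] [DecidableEq A] {x : ι → A} {s : ℕ} {τ : Fin s → ι}

lemma card_le_card_image_of_injective_comp (hτ : Function.Injective (x ∘ τ)) :
    s ≤ #(univ.image x) :=
  calc s = #(univ.image (x ∘ τ)) := by rw [card_image_of_injective _ hτ, card_fin]
    _ ≤ #(univ.image x) := card_le_card (image_subset_iff.2 fun i _ ↦ by simp)

lemma image_comp_eq_image_of_injective (hτ : Function.Injective (x ∘ τ))
    (hs : #(univ.image x) ≤ s) : univ.image (x ∘ τ) = univ.image x := by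
  refine eq_of_subset_of_card_le (image_subset_iff.2 fun i _ ↦ by simp) ?_
  rwa [card_image_of_injective _ hτ, card_fin]

lemma exists_injective_comp (x : ι → A) :
    ∃ τ : Fin #(univ.image x) → ι, Function.Injective (x ∘ τ) := by
  have hx (w : univ.image x) : ∃ i, x i = w := by simpa using mem_image.1 w.2
  choose g hg using hx
  refine ⟨g ∘ (univ.image x).equivFin.symm, ?_⟩
  rw [← Function.comp_assoc, show x ∘ g = Subtype.val from funext hg]
  exact Subtype.val_injective.comp (Equiv.injective _)

end Images

section Subdiscriminants

open Finset

variable {ι A B : Type*} [Fintype ι] [CommRing A] [CommRing B]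

/-- The `s`-th subdiscriminant `∑ ∏_{i ≠ j} (x (τ i) - x (τ j)) * ∏ i, y (τ i)` of the family `x`
with weights `y`, up to the factor `s!` coming from summing over all maps `τ` instead of over all
`s`-element sets of indices. -/
def weightedSubdiscr (s : ℕ) (x y : ι → A) : A :=
  ∑ τ : Fin s → ι, (∏ p ∈ (univ : Finset (Fin s)).offDiag, ((x ∘ τ) p.1 - (x ∘ τ) p.2)) *
    ∏ i, y (τ i)

lemma map_weightedSubdiscr (φ : A →+* B) (s : ℕ) (x y : ι → A) :
    φ (weightedSubdiscr s x y) = weightedSubdiscr s (φ ∘ x) (φ ∘ y) := by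
  simp [weightedSubdiscr, map_sum, map_prod]

lemma weightedSubdiscr_comp_perm (s : ℕ) (x y : ι → A) (e : Equiv.Perm ι) :
    weightedSubdiscr s (x ∘ e) (y ∘ e) = weightedSubdiscr s x y :=
  Fintype.sum_equiv ((Equiv.refl (Fin s)).arrowCongr e) _ _ fun _ ↦ rfl

lemma isSymmetric_weightedSubdiscr (s : ℕ) {y : ι → MvPolynomial ι A}
    (hy : ∀ (e : Equiv.Perm ι) i, MvPolynomial.rename e (y i) = y (e i)) :
    (weightedSubdiscr s MvPolynomial.X y).IsSymmetric := fun e ↦ by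
  refine (map_weightedSubdiscr (MvPolynomial.rename (R := A) e).toRingHom s _ _).trans ?_
  rw [← weightedSubdiscr_comp_perm s MvPolynomial.X y e]
  congr 1
  · exact funext fun i ↦ MvPolynomial.rename_X e i
  · exact funext (hy e)

lemma prod_offDiag_sub_eq_zero {s : ℕ} {x : Fin s → A} (hx : ¬ Function.Injective x) :
    ∏ p ∈ (univ : Finset (Fin s)).offDiag, (x p.1 - x p.2) = 0 := by
  obtain ⟨i, j, hxij, hij⟩ := Function.not_injective_iff.1 hx
  exact prod_eq_zero (i := (i, j)) (by simp [hij]) (sub_eq_zero.2 hxij)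

variable [DecidableEq A] {x : ι → A}

lemma weightedSubdiscr_eq_zero {s : ℕ} (hs : #(univ.image x) < s) (y : ι → A) :
    weightedSubdiscr s x y = 0 := by
  refine sum_eq_zero fun τ _ ↦ ?_
  rw [prod_offDiag_sub_eq_zero fun hτ ↦ (card_le_card_image_of_injective_comp hτ).not_gt hs,
    zero_mul]

lemma prod_offDiag_comp_of_injective {s : ℕ} {x : Fin s → A} (hx : Function.Injective x) :
    ∏ p ∈ (univ : Finset (Fin s)).offDiag, (x p.1 - x p.2) =
      ∏ p ∈ (univ.image x).offDiag, (p.1 - p.2) := by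
  have hoffDiag : (univ.image x).offDiag = univ.offDiag.image (Prod.map x x) := by
    ext ⟨u, v⟩
    simp only [mem_offDiag, mem_image, mem_univ, true_and, Prod.exists, Prod.map_apply,
      Prod.mk.injEq]
    exact ⟨fun ⟨⟨i, hi⟩, ⟨j, hj⟩, huv⟩ ↦ ⟨i, j, ne_of_apply_ne x (by rwa [hi, hj]), hi, hj⟩,
      fun ⟨i, j, hij, hi, hj⟩ ↦ ⟨⟨i, hi⟩, ⟨j, hj⟩, hi ▸ hj ▸ hx.ne hij⟩⟩
  rw [hoffDiag, prod_image (hx.prodMap hx).injOn]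
  rfl

lemma exists_weightedSubdiscr_card_eq [IsDomain A] [CharZero A] (x : ι → A) :
    ∃ N : A, N ≠ 0 ∧ ∀ y : A → A,
      weightedSubdiscr #(univ.image x) x (y ∘ x) = N * ∏ w ∈ univ.image x, y w := by
  classical
  let G : Finset (Fin #(univ.image x) → ι) := {τ | Function.Injective (x ∘ τ)}
  let Δ : A := ∏ p ∈ (univ.image x).offDiag, (p.1 - p.2)
  have hΔ : Δ ≠ 0 := prod_ne_zero_iff.2 fun p hp ↦ sub_ne_zero.2 (mem_offDiag.1 hp).2.2
  obtain ⟨τ₀, hτ₀⟩ := exists_injective_comp x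
  have hG : #G ≠ 0 := card_ne_zero_of_mem (mem_filter.2 ⟨mem_univ τ₀, hτ₀⟩)
  refine ⟨#G * Δ, mul_ne_zero (Nat.cast_ne_zero.2 hG) hΔ, fun y ↦ ?_⟩
  calc weightedSubdiscr #(univ.image x) x (y ∘ x)
      = ∑ τ ∈ G, (∏ p ∈ univ.offDiag, ((x ∘ τ) p.1 - (x ∘ τ) p.2)) * ∏ i, y ((x ∘ τ) i) := by
        refine (sum_subset (subset_univ G) fun τ _ hτ ↦ ?_).symm
        rw [prod_offDiag_sub_eq_zero (by simpa [G] using hτ), zero_mul]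
    _ = ∑ _ ∈ G, Δ * ∏ w ∈ univ.image x, y w := by
        refine sum_congr rfl fun τ hτ ↦ ?_
        have hinj : Function.Injective (x ∘ τ) := (mem_filter.1 hτ).2
        rw [prod_offDiag_comp_of_injective hinj, ← prod_image hinj.injOn (f := y),
          image_comp_eq_image_of_injective hinj le_rfl]
    _ = #G * Δ * ∏ w ∈ univ.image x, y w := by rw [sum_const, nsmul_eq_mul, mul_assoc]

end Subdiscriminants

section MonicPolynomials

open Finset Polynomial

variable {R : Type*} [CommRing R] {m : ℕ}

/-- The monic polynomial of degree `m` with lower coefficients `a`. -/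
noncomputable def monicPoly (a : Fin m → R) : R[X] :=
  ∑ i, C (a i) * X ^ (i : ℕ) + X ^ m

lemma monic_monicPoly (a : Fin m → R) : (monicPoly a).Monic := by
  rw [monicPoly, add_comm]
  exact monic_X_pow_add (degree_sum_fin_lt a)

lemma natDegree_monicPoly [Nontrivial R] (a : Fin m → R) : (monicPoly a).natDegree = m := by
  rw [monicPoly, natDegree_add_eq_right_of_degree_lt, natDegree_X_pow]
  rw [degree_X_pow]
  exact degree_sum_fin_lt a

lemma coeff_monicPoly (a : Fin m → R) (i : Fin m) : (monicPoly a).coeff i = a i := by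
  simp [monicPoly, finsetSum_coeff, coeff_X_pow, i.2.ne, Fin.val_inj]

lemma eval_monicPoly (a : Fin m → R) (z : R) :
    (monicPoly a).eval z = ∑ i, a i * z ^ (i : ℕ) + z ^ m := by
  simp [monicPoly, eval_finsetSum]

lemma exists_map_eq_roots_monicPoly {K : Type*} [Field K] [IsAlgClosed K] (a : Fin m → K) :
    ∃ r : Fin m → K, univ.val.map r = (monicPoly a).roots := by
  have hcard : (monicPoly a).roots.card = m := by
    rw [← (IsAlgClosed.splits _).natDegree_eq_card_roots, natDegree_monicPoly]
  obtain ⟨l, hl⟩ := Quot.exists_rep (monicPoly a).roots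
  obtain rfl : l.length = m := by rw [← hcard, ← hl]; rfl
  refine ⟨l.get, ?_⟩
  rw [Fin.univ_val_map, List.ofFn_get]
  exact hl

lemma esymm_eq_of_map_eq_roots_monicPoly {K : Type*} [Field K] [IsAlgClosed K] {a r : Fin m → K}
    (hr : univ.val.map r = (monicPoly a).roots) (i : Fin m) :
    (univ.val.map r).esymm (i + 1) = (-1) ^ ((i : ℕ) + 1) * a i.rev := by
  have hvieta := coeff_eq_esymm_roots_of_splits (IsAlgClosed.splits (monicPoly a))
    (k := i.rev) (by rw [natDegree_monicPoly]; exact i.rev.2.le)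
  rw [coeff_monicPoly, natDegree_monicPoly, ← hr, monic_monicPoly a,
    show m - (i.rev : ℕ) = i + 1 by rw [Fin.val_rev]; omega] at hvieta
  rw [hvieta, one_mul, ← mul_assoc, ← mul_pow]
  simp

end MonicPolynomials

section AnalyticSubdiscriminants

open Finset Polynomial

variable {m : ℕ}

lemma analyticAt_eval₂Hom_evalRingHom {E ι : Type*} [NormedAddCommGroup E] [NormedSpace ℝ E]
    {c : ι → E → ℝ} {ζ : E → ℝ} {y : E} (hc : ∀ i, AnalyticAt ℝ (c i) y) (hζ : AnalyticAt ℝ ζ y)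
    (Q : MvPolynomial ι ℝ[X]) :
    AnalyticAt ℝ (fun v ↦ MvPolynomial.eval₂Hom (evalRingHom (ζ v)) (c · v) Q) y := by
  induction Q using MvPolynomial.induction_on with
  | C p => simpa using hζ.aeval_polynomial p
  | add P Q hP hQ => simpa only [map_add] using hP.fun_add hQ
  | mul_X P i hP =>
    simpa only [map_mul, MvPolynomial.eval₂Hom_X'] using hP.fun_mul (hc i)

lemma exists_analyticAt_eq_eval₂Hom_roots {Q : MvPolynomial (Fin m) ℝ[X]} (hQ : Q.IsSymmetric) :
    ∃ g : (Fin m → ℝ) × ℝ → ℝ, (∀ p, AnalyticAt ℝ g p) ∧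
      ∀ (a : Fin m → ℝ) (r : Fin m → ℂ), univ.val.map r = (monicPoly fun i ↦ (a i : ℂ)).roots →
        ∀ z : ℝ, (g (a, z) : ℂ) =
          MvPolynomial.eval₂Hom (Complex.ofRealHom.comp (evalRingHom z)) r Q := by
  obtain ⟨P, hP⟩ := MvPolynomial.esymmAlgHom_fin_surjective (m := m) (n := m) ℝ[X] le_rfl ⟨Q, hQ⟩
  have hPQ : MvPolynomial.aeval (fun i : Fin m ↦ MvPolynomial.esymm _ ℝ[X] (i + 1)) P = Q := by
    rw [← MvPolynomial.esymmAlgHom_apply, hP]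
  let c (i : Fin m) (p : (Fin m → ℝ) × ℝ) : ℝ := (-1) ^ ((i : ℕ) + 1) * p.1 i.rev
  have hc (i) (p) : AnalyticAt ℝ (c i) p :=
    analyticAt_const.mul (analyticAt_pi_iff.1 analyticAt_fst i.rev)
  refine ⟨fun p ↦ MvPolynomial.eval₂Hom (evalRingHom p.2) (c · p) P,
    fun p ↦ analyticAt_eval₂Hom_evalRingHom (hc · p) analyticAt_snd P, fun a r hr z ↦ ?_⟩
  have hesymm (i : Fin m) : MvPolynomial.eval₂Hom (Complex.ofRealHom.comp (evalRingHom z)) r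
      (MvPolynomial.esymm (Fin m) ℝ[X] (i + 1)) = c i (a, z) := by
    have hvieta := esymm_eq_of_map_eq_roots_monicPoly hr i
    rw [esymm_map_val] at hvieta
    simpa [MvPolynomial.esymm, c] using hvieta
  rw [← hPQ, MvPolynomial.map_aeval]
  simp_rw [hesymm]
  exact (MvPolynomial.map_eval₂Hom _ _ Complex.ofRealHom P).trans
    (MvPolynomial.eval₂Hom_congr (by ext <;> simp) rfl rfl)

lemma exists_analyticAt_weightedSubdiscr (s : ℕ) {y : Fin m → MvPolynomial (Fin m) ℝ[X]}
    (hy : ∀ (e : Equiv.Perm (Fin m)) i, MvPolynomial.rename e (y i) = y (e i)) :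
    ∃ g : (Fin m → ℝ) × ℝ → ℝ, (∀ p, AnalyticAt ℝ g p) ∧
      ∀ (a : Fin m → ℝ) (r : Fin m → ℂ), univ.val.map r = (monicPoly fun i ↦ (a i : ℂ)).roots →
        ∀ z : ℝ, (g (a, z) : ℂ) = weightedSubdiscr s r fun i ↦
          MvPolynomial.eval₂Hom (Complex.ofRealHom.comp (evalRingHom z)) r (y i) := by
  obtain ⟨g, hg, hgr⟩ := exists_analyticAt_eq_eval₂Hom_roots (isSymmetric_weightedSubdiscr s hy)
  refine ⟨g, hg, fun a r hr z ↦ ?_⟩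
  rw [hgr a r hr z, map_weightedSubdiscr]
  congr 1
  exact funext fun i ↦ MvPolynomial.eval₂Hom_X' _ _ i

lemma exists_subdiscr_and_squarefreePart (m : ℕ) : ∃ (D : Fin (m + 1) → (Fin m → ℝ) → ℝ)
    (q : Fin (m + 1) → (Fin m → ℝ) × ℝ → ℝ),
    (∀ s a, AnalyticAt ℝ (D s) a) ∧ (∀ s p, AnalyticAt ℝ (q s) p) ∧
    ∀ a, ∃ s, D s a ≠ 0 ∧ (∀ j > s, D j a = 0) ∧ ∃ N : ℂ, N ≠ 0 ∧ ∀ z : ℝ,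
      (q s (a, z) : ℂ) = N * ∏ w ∈ (monicPoly fun i ↦ (a i : ℂ)).roots.toFinset, (z - w) := by
  choose D hD hDr using fun s ↦ exists_analyticAt_weightedSubdiscr (m := m) s (y := 1)
    (fun e _ ↦ map_one _)
  choose q hq hqr using fun s ↦ exists_analyticAt_weightedSubdiscr (m := m) s
    (y := fun i ↦ MvPolynomial.C X - MvPolynomial.X i) (fun e i ↦ by simp)
  refine ⟨fun s a ↦ D s (a, 0), fun s ↦ q s, fun s a ↦ (hD s (a, 0)).along_fst,
    fun s ↦ hq s, fun a ↦ ?_⟩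
  obtain ⟨r, hr⟩ := exists_map_eq_roots_monicPoly fun i ↦ (a i : ℂ)
  have hT : univ.image r = (monicPoly fun i ↦ (a i : ℂ)).roots.toFinset := by
    rw [← hr]
    rfl
  have hcard : #(univ.image r) < m + 1 := Nat.lt_succ_of_le (card_image_le.trans_eq (card_fin m))
  obtain ⟨N, hN, hNr⟩ := exists_weightedSubdiscr_card_eq r
  refine ⟨⟨#(univ.image r), hcard⟩, fun hDs ↦ ?_, fun j hj ↦ ?_, N, hN, fun z ↦ ?_⟩
  · have hDN := (hDr _ a r hr 0).symm.trans (congrArg Complex.ofReal hDs)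
    simp only [Pi.one_apply, map_one, Complex.ofReal_zero] at hDN
    exact hN (by simpa using (hNr 1).symm.trans hDN)
  · rw [← Complex.ofReal_eq_zero, hDr _ a r hr 0]
    exact weightedSubdiscr_eq_zero hj _
  · rw [hqr _ a r hr z, ← hT, ← hNr (z - ·)]
    congr 1
    ext i
    simp

lemma deriv_ne_zero_of_eq_mul_prod {g : ℝ → ℝ} {z : ℝ} (hg : DifferentiableAt ℝ g z) {N : ℂ}
    (hN : N ≠ 0) {T : Finset ℂ} (hgT : ∀ z : ℝ, (g z : ℂ) = N * ∏ w ∈ T, (z - w)) (hz : ↑z ∈ T) :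
    deriv g z ≠ 0 := by
  intro hgz
  let G : ℂ[X] := ∏ w ∈ T, (X - C w)
  have hG (ζ : ℂ) : G.eval ζ = ∏ w ∈ T, (ζ - w) := by simp [G, eval_prod]
  have hsep : G.Separable := separable_prod_X_sub_C_iff'.2 fun _ _ _ _ h ↦ h
  have hroot : G.eval (z : ℂ) = 0 := (hG z).trans (prod_eq_zero hz (sub_self _))
  have hderiv : HasDerivAt (fun z : ℝ ↦ (g z : ℂ)) (N * G.derivative.eval (z : ℂ)) z := by
    simp only [hgT, ← hG]
    exact ((G.hasDerivAt (z : ℂ)).const_mul N).comp_ofReal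
  have hG' := hg.hasDerivAt.ofReal_comp.unique hderiv
  rw [hgz, Complex.ofReal_zero] at hG'
  exact hsep.eval₂_derivative_ne_zero (RingHom.id ℂ) hroot
    ((mul_eq_zero.1 hG'.symm).resolve_left hN)

lemma exists_subdiscr_and_simple_equation (m : ℕ) : ∃ (D : Fin (m + 1) → (Fin m → ℝ) → ℝ)
    (q : Fin (m + 1) → (Fin m → ℝ) × ℝ → ℝ),
    (∀ s a, AnalyticAt ℝ (D s) a) ∧ (∀ s p, AnalyticAt ℝ (q s) p) ∧
    ∀ a, ∃ s, D s a ≠ 0 ∧ (∀ j > s, D j a = 0) ∧ ∀ z : ℝ,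
      (q s (a, z) = 0 ↔ (monicPoly a).eval z = 0) ∧
      (q s (a, z) = 0 → deriv (fun t ↦ q s (a, t)) z ≠ 0) := by
  obtain ⟨D, q, hD, hq, hDq⟩ := exists_subdiscr_and_squarefreePart m
  refine ⟨D, q, hD, hq, fun a ↦ ?_⟩
  obtain ⟨s, hDs, hDj, N, hN, hqN⟩ := hDq a
  refine ⟨s, hDs, hDj, fun z ↦ ?_⟩
  have hroot : q s (a, z) = 0 ↔ ↑z ∈ (monicPoly fun i ↦ (a i : ℂ)).roots.toFinset := by
    rw [← Complex.ofReal_eq_zero, hqN, mul_eq_zero, or_iff_right hN]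
    simp [prod_eq_zero_iff, sub_eq_zero]
  refine ⟨hroot.trans ?_, fun hz ↦ ?_⟩
  · rw [Multiset.mem_toFinset, mem_roots (monic_monicPoly _).ne_zero, IsRoot, eval_monicPoly,
      eval_monicPoly]
    exact_mod_cast Iff.rfl
  · exact deriv_ne_zero_of_eq_mul_prod ((hq s (a, z)).differentiableAt.comp z (by fun_prop)) hN hqN
      (hroot.1 hz)

end AnalyticSubdiscriminants

/-! ### Analytic submanifolds -/

section Submanifolds

variable {E E' : Type*} [NormedAddCommGroup E] [NormedSpace ℝ E]
  [NormedAddCommGroup E'] [NormedSpace ℝ E'] {k : ℕ} {S T : Set E}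

/-- Near its point `x`, the set `S` is the common zero set of `k` analytic functions with linearly
independent differentials at `x`, that is, an analytic submanifold of codimension `k`. -/
def IsAnalyticSubmanifoldAt (k : ℕ) (S : Set E) (x : E) : Prop :=
  ∃ h : E → Fin k → ℝ, AnalyticAt ℝ h x ∧ h x = 0 ∧ Function.Surjective (fderiv ℝ h x) ∧
    ∀ᶠ y in 𝓝 x, (y ∈ S ↔ h y = 0)

namespace IsAnalyticSubmanifoldAt

lemma mem {x : E} (hS : IsAnalyticSubmanifoldAt k S x) : x ∈ S := by
  obtain ⟨h, -, hx, -, hzero⟩ := hS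
  exact hzero.self_of_nhds.2 hx

lemma of_mem_nhds {x : E} (hS : S ∈ 𝓝 x) : IsAnalyticSubmanifoldAt 0 S x :=
  ⟨0, analyticAt_const, rfl, Function.surjective_to_subsingleton _,
    Filter.mem_of_superset hS fun _ hy ↦ ⟨fun _ ↦ rfl, fun _ ↦ hy⟩⟩

lemma congr {x : E} (hS : IsAnalyticSubmanifoldAt k S x) (hST : S =ᶠ[𝓝 x] T) :
    IsAnalyticSubmanifoldAt k T x := by
  obtain ⟨h, han, hx, hsurj, hzero⟩ := hS
  refine ⟨h, han, hx, hsurj, ?_⟩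
  filter_upwards [hzero, hST.mem_iff] with y hy hyST using hyST.symm.trans hy

lemma preimage {g : E' → E} {x : E'} (hg : AnalyticAt ℝ g x)
    (hsurj : Function.Surjective (fderiv ℝ g x)) (hS : IsAnalyticSubmanifoldAt k S (g x)) :
    IsAnalyticSubmanifoldAt k (g ⁻¹' S) x := by
  obtain ⟨h, han, hx, hh, hzero⟩ := hS
  refine ⟨h ∘ g, han.comp hg, hx, ?_, hg.continuousAt.eventually hzero⟩
  rw [fderiv_comp x han.differentiableAt hg.differentiableAt]
  exact hh.comp hsurj

lemma inter_zeros {y : E × ℝ} (hS : IsAnalyticSubmanifoldAt k S y.1) {Q : E × ℝ → ℝ}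
    (hQ : AnalyticAt ℝ Q y) (hQy : Q y = 0) (hdQ : fderiv ℝ Q y (0, 1) ≠ 0) :
    IsAnalyticSubmanifoldAt (k + 1) (Prod.fst ⁻¹' S ∩ {v | Q v = 0}) y := by
  obtain ⟨h, han, hx, hsurj, hzero⟩ := hS
  let h' : E × ℝ → Fin (k + 1) → ℝ := fun v ↦ Fin.cons (Q v) (h v.1)
  have hh' : AnalyticAt ℝ (h ∘ Prod.fst) y := han.comp analyticAt_fst
  have hderiv : HasFDerivAt h' (ContinuousLinearMap.pi (Fin.cons (fderiv ℝ Q y) fun i ↦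
      .proj i ∘L fderiv ℝ h y.1 ∘L .fst ℝ E ℝ)) y := by
    refine hasFDerivAt_pi.2 (Fin.cases hQ.differentiableAt.hasFDerivAt fun i ↦ ?_)
    exact hasFDerivAt_pi'.1 (han.differentiableAt.hasFDerivAt.comp y hasFDerivAt_fst) i
  refine ⟨h', analyticAt_pi_iff.2 (Fin.cases hQ (analyticAt_pi_iff.1 hh')),
    funext (Fin.cases hQy (congrFun hx)), ?_, ?_⟩
  · rw [hderiv.fderiv]
    intro w
    obtain ⟨e, he⟩ := hsurj (Fin.tail w)
    have hsplit (t : ℝ) : fderiv ℝ Q y (e, t) = fderiv ℝ Q y (e, 0) + t * fderiv ℝ Q y (0, 1) := by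
      rw [← smul_eq_mul, ← map_smul, ← map_add]
      simp
    refine ⟨(e, (w 0 - fderiv ℝ Q y (e, 0)) / fderiv ℝ Q y (0, 1)), funext (Fin.cases ?_ ?_)⟩
    · simp only [ContinuousLinearMap.pi_apply, Fin.cons_zero]
      rw [hsplit, div_mul_cancel₀ _ hdQ, add_sub_cancel]
    · exact congrFun he
  · filter_upwards [(continuous_fst.tendsto y).eventually hzero] with v hv
    simp only [Set.mem_inter_iff, Set.mem_preimage, hv, Set.mem_ofPred_eq]
    exact ⟨fun hv ↦ funext (Fin.cases hv.2 (congrFun hv.1)),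
      fun hv ↦ ⟨funext fun i ↦ congrFun hv i.succ, congrFun hv 0⟩⟩

lemma le_finrank [FiniteDimensional ℝ E] {x : E} (hS : IsAnalyticSubmanifoldAt k S x) :
    k ≤ Module.finrank ℝ E := by
  obtain ⟨h, -, -, hsurj, -⟩ := hS
  simpa using LinearMap.finrank_le_finrank_of_surjective (f := (fderiv ℝ h x).toLinearMap) hsurj

end IsAnalyticSubmanifoldAt

end Submanifolds

section Parametrizations

variable {E : Type*} [NormedAddCommGroup E] [NormedSpace ℝ E] [FiniteDimensional ℝ E]
  {d' k : ℕ} {M : Set E} {x : E}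

/-- Near `x`, the set `M` is the image of the slice `ℝ^{d'} × {0}` under an analytic homeomorphism
from a neighbourhood `W` of `0` in `ℝ^{d'} × ℝ^k` onto a neighbourhood `U` of `x`. -/
def IsAnalyticallyParametrizedAt {E : Type*} [NormedAddCommGroup E] [NormedSpace ℝ E]
    (d' k : ℕ) (M : Set E) (x : E) : Prop :=
  ∃ (U : Set E) (W : Set ((Fin d' → ℝ) × (Fin k → ℝ))) (φ : (Fin d' → ℝ) × (Fin k → ℝ) → E),
    IsOpen U ∧ x ∈ U ∧ IsOpen W ∧ (0 : (Fin d' → ℝ) × (Fin k → ℝ)) ∈ W ∧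
    (∀ w ∈ W, AnalyticAt ℝ φ w) ∧
    (∃ h : W ≃ₜ U, ∀ w : W, (h w : E) = φ w) ∧
    M ∩ U = {y | ∃ τ : Fin d' → ℝ, (τ, 0) ∈ W ∧ φ (τ, 0) = y}

lemma exists_bijective_prod (hd : Module.finrank ℝ E = d' + k) (T : E →L[ℝ] (Fin k → ℝ))
    (hT : Function.Surjective T) :
    ∃ π : E →L[ℝ] (Fin d' → ℝ), Function.Bijective (π.prod T) := by
  have hker : Module.finrank ℝ T.ker = Module.finrank ℝ (Fin d' → ℝ) := by
    have hrank := LinearMap.finrank_range_add_finrank_ker T.toLinearMap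
    rw [LinearMap.range_eq_top.2 hT, finrank_top] at hrank
    simp only [Module.finrank_fin_fun] at hrank ⊢
    omega
  let e := LinearEquiv.ofFinrankEq _ _ hker
  obtain ⟨P, hP⟩ := LinearMap.exists_leftInverse_of_injective T.ker.subtype (by simp)
  let π : E →L[ℝ] (Fin d' → ℝ) := LinearMap.toContinuousLinearMap (e.toLinearMap ∘ₗ P)
  have hinj : Function.Injective (π.prod T).toLinearMap := by
    refine (injective_iff_map_eq_zero _).2 fun v hv ↦ ?_
    have hπv : e (P v) = 0 := congrArg Prod.fst hv
    have hTv : T v = 0 := congrArg Prod.snd hv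
    have hPv : P v = ⟨v, hTv⟩ := LinearMap.congr_fun hP ⟨v, hTv⟩
    rw [LinearEquiv.map_eq_zero_iff, hPv] at hπv
    exact congrArg Subtype.val hπv
  exact ⟨π, hinj,
    (LinearMap.injective_iff_surjective_of_finrank_eq_finrank (by simp [hd])).1 hinj⟩

lemma exists_flattening (hd : Module.finrank ℝ E = d' + k) (hM : IsAnalyticSubmanifoldAt k M x) :
    ∃ Θ : OpenPartialHomeomorph E ((Fin d' → ℝ) × (Fin k → ℝ)), x ∈ Θ.source ∧ Θ x = 0 ∧
      AnalyticAt ℝ Θ.symm 0 ∧ ∀ᶠ y in 𝓝 x, (y ∈ M ↔ (Θ y).2 = 0) := by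
  have : CompleteSpace E := FiniteDimensional.complete ℝ E
  obtain ⟨h, han, hx, hsurj, hzero⟩ := hM
  obtain ⟨π, hπ⟩ := exists_bijective_prod hd _ hsurj
  let Φ : E → (Fin d' → ℝ) × (Fin k → ℝ) := fun y ↦ (π y - π x, h y)
  have hΦ : AnalyticAt ℝ Φ x := ((π.analyticAt x).sub analyticAt_const).prod han
  have hderiv : HasFDerivAt Φ (π.prod (fderiv ℝ h x)) x :=
    (π.hasFDerivAt.sub_const _).prodMk han.differentiableAt.hasFDerivAt
  obtain ⟨Θ, hxΘ, hΘ, hsymm⟩ := exists_openPartialHomeomorph_analyticAt_symm hΦ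
    (hderiv.fderiv ▸ hπ)
  have hΦx : Φ x = 0 := by simp [Φ, hx]
  exact ⟨Θ, hxΘ, hΘ ▸ hΦx, hΦx ▸ hsymm, hΘ ▸ hzero⟩

lemma IsAnalyticSubmanifoldAt.isAnalyticallyParametrizedAt (hd : Module.finrank ℝ E = d' + k)
    (hM : IsAnalyticSubmanifoldAt k M x) : IsAnalyticallyParametrizedAt d' k M x := by
  obtain ⟨Θ, hxΘ, hΘx, hsymm, hMΘ⟩ := exists_flattening hd hM
  have hsymm0 : Θ.symm 0 = x := hΘx ▸ Θ.left_inv hxΘ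
  have hM0 : ∀ᶠ w in 𝓝 0, (Θ.symm w ∈ M ↔ (Θ (Θ.symm w)).2 = 0) :=
    hsymm.continuousAt.eventually (hsymm0.symm ▸ hMΘ)
  have htarget : ∀ᶠ w in 𝓝 0, w ∈ Θ.target := Θ.open_target.mem_nhds (hΘx ▸ Θ.map_source hxΘ)
  obtain ⟨W, hW, hWo, h0W⟩ := mem_nhds_iff.1
    (htarget.and (hsymm.eventually_analyticAt.and hM0))
  have hWΘ : W ⊆ Θ.target := fun w hw ↦ (hW hw).1
  have hslice (w) (hw : w ∈ W) : Θ.symm w ∈ M ↔ w.2 = 0 := by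
    rw [(hW hw).2.2, Θ.right_inv (hWΘ hw)]
  let R := Θ.symm.restrOpen W hWo
  have hRsource : R.source = W := Set.inter_eq_right.2 hWΘ
  have hRtarget : R.target = Θ.symm '' W := by
    rw [← R.image_source_eq_target, hRsource]
    rfl
  refine ⟨R.target, R.source, Θ.symm, R.open_target, hRtarget ▸ ⟨0, h0W, hsymm0⟩, R.open_source,
    hRsource ▸ h0W, fun w hw ↦ (hW (hRsource ▸ hw)).2.1, ⟨R.toHomeomorphSourceTarget, fun _ ↦ rfl⟩,
    ?_⟩
  rw [hRtarget, hRsource]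
  ext y
  constructor
  · rintro ⟨hyM, ⟨τ, u⟩, hw, rfl⟩
    obtain rfl : u = 0 := (hslice _ hw).1 hyM
    exact ⟨τ, hw, rfl⟩
  · rintro ⟨τ, hτ, rfl⟩
    exact ⟨(hslice _ hτ).2 rfl, _, hτ, rfl⟩

end Parametrizations

/-! ### Stratifications adapted to zero sets -/

section SimpleEquations

variable {E : Type*} [NormedAddCommGroup E] [NormedSpace ℝ E]

/-- Near `y` and over the subset `S` of the parameter space `E`, the zero set of `f` is that of an
analytic function `Q` whose zero at `y`, if there is one, is simple in the last coordinate. -/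
def IsSimpleOver (f : E × ℝ → ℝ) (S : Set E) (y : E × ℝ) : Prop :=
  ∃ Q : E × ℝ → ℝ, AnalyticAt ℝ Q y ∧ (∀ᶠ v in 𝓝[Prod.fst ⁻¹' S] y, (Q v = 0 ↔ f v = 0)) ∧
    (f y = 0 → fderiv ℝ Q y (0, 1) ≠ 0)

lemma deriv_snd_eq_fderiv {Q : E × ℝ → ℝ} {y : E × ℝ} (hQ : DifferentiableAt ℝ Q y) :
    deriv (fun t ↦ Q (y.1, t)) y.2 = fderiv ℝ Q y (0, 1) :=
  (hQ.hasFDerivAt.comp_hasDerivAt (f := fun t ↦ (y.1, t)) y.2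
    ((hasDerivAt_const y.2 y.1).prodMk (hasDerivAt_id y.2))).deriv

lemma exists_discriminants {f : E × ℝ → ℝ} (hf : AnalyticAt ℝ f 0)
    (hne : ∃ᶠ t in 𝓝 0, f (0, t) ≠ 0) :
    ∃ (m : ℕ) (D : Fin (m + 1) → E → ℝ), (∀ s, AnalyticAt ℝ (D s) 0) ∧ ∀ᶠ y in 𝓝 (0 : E × ℝ),
      ∀ S : Set E, y.1 ∈ S → (∀ s, D s y.1 = 0 → ∀ᶠ x in 𝓝[S] y.1, D s x = 0) →
        IsSimpleOver f S y := by
  obtain ⟨m, a, ha, hfa⟩ := exists_weierstrass_polynomial hf hne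
  obtain ⟨D, q, hD, hq, hDq⟩ := exists_subdiscr_and_simple_equation m
  refine ⟨m, fun s ↦ D s ∘ a, fun s ↦ (hD s _).comp ha, ?_⟩
  have hfst : Tendsto Prod.fst (𝓝 (0 : E × ℝ)) (𝓝 0) := continuous_fst.tendsto _
  filter_upwards [hfst.eventually ha.eventually_analyticAt, hfa.eventually_nhds]
    with y ha hfa S hyS hDS
  obtain ⟨s, hDs, hDj, hqs⟩ := hDq (a y.1)
  have hpair : AnalyticAt ℝ (fun v : E × ℝ ↦ (a v.1, v.2)) y :=
    (ha.comp analyticAt_fst).prod analyticAt_snd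
  have hQ : AnalyticAt ℝ (fun v : E × ℝ ↦ q s (a v.1, v.2)) y := (hq s _).fun_comp hpair
  have hzeros : ∀ᶠ v in 𝓝[Prod.fst ⁻¹' S] y, (q s (a v.1, v.2) = 0 ↔ f v = 0) := by
    have hDs' : ∀ᶠ x in 𝓝[S] y.1, D s (a x) ≠ 0 :=
      (((hD s _).comp ha).continuousAt.eventually_ne hDs).filter_mono nhdsWithin_le_nhds
    have hDj' : ∀ᶠ x in 𝓝[S] y.1, ∀ j > s, D j (a x) = 0 :=
      eventually_all.2 fun j ↦ eventually_imp_distrib_left.2 fun hj ↦ hDS j (hDj j hj)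
    have hfstS : Tendsto Prod.fst (𝓝[Prod.fst ⁻¹' S] y) (𝓝[S] y.1) :=
      continuous_fst.continuousWithinAt.tendsto_nhdsWithin (Set.mapsTo_preimage _ _)
    filter_upwards [hfstS.eventually hDs', hfstS.eventually hDj', hfa.filter_mono
      nhdsWithin_le_nhds] with v hvs hvj hfv
    obtain ⟨s', hDs', hDj', hqs'⟩ := hDq (a v.1)
    obtain rfl : s = s' := le_antisymm (not_lt.1 fun h ↦ hvs (hDj' _ h))
      (not_lt.1 fun h ↦ hDs' (hvj _ h))
    rw [(hqs' v.2).1, hfv, eval_monicPoly]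
  refine ⟨_, hQ, hzeros, fun hfy ↦ ?_⟩
  rw [← deriv_snd_eq_fderiv hQ.differentiableAt]
  exact (hqs y.2).2 ((hzeros.self_of_nhdsWithin hyS).2 hfy)

lemma exists_tendsto_eventually_eq_zero_iff [CompleteSpace E] {Q : E × ℝ → ℝ} {y : E × ℝ}
    (hQ : AnalyticAt ℝ Q y) (hQy : Q y = 0) (hdQ : fderiv ℝ Q y (0, 1) ≠ 0) :
    ∃ ρ : E → ℝ, Tendsto ρ (𝓝 y.1) (𝓝 y.2) ∧ ∀ᶠ v in 𝓝 y, (Q v = 0 ↔ ρ v.1 = v.2) := by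
  have hinv : (fderiv ℝ Q y ∘L .inr ℝ E ℝ).IsInvertible := by
    refine ⟨ContinuousLinearEquiv.smulLeft (Units.mk0 _ hdQ), ?_⟩
    ext
    simp
  have hstrict := hQ.hasStrictFDerivAt
  have hzero := hstrict.eventually_apply_eq_iff_implicitFunctionOfProdDomain hinv
  rw [hQy] at hzero
  exact ⟨_, hstrict.tendsto_implicitFunctionOfProdDomain hinv, hzero⟩

namespace IsSimpleOver

variable {f F : E × ℝ → ℝ} {S : Set E} {y : E × ℝ}

lemma exists_tendsto [CompleteSpace E] (hf : IsSimpleOver f S y) (hyS : y.1 ∈ S) (hfy : f y = 0) :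
    ∃ ρ : E → ℝ, Tendsto ρ (𝓝 y.1) (𝓝 y.2) ∧
      ∀ᶠ v in 𝓝[Prod.fst ⁻¹' S] y, (f v = 0 ↔ ρ v.1 = v.2) := by
  obtain ⟨Q, hQ, hzeros, hdQ⟩ := hf
  obtain ⟨ρ, hρ, hQρ⟩ := exists_tendsto_eventually_eq_zero_iff hQ
    ((hzeros.self_of_nhdsWithin hyS).2 hfy) (hdQ hfy)
  refine ⟨ρ, hρ, ?_⟩
  filter_upwards [hzeros, hQρ.filter_mono nhdsWithin_le_nhds] with v hfv hρv
  rw [← hfv, hρv]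

/-- Both zero sets are graphs over `S`, so an inclusion between them is an equality. -/
lemma eventually_eq_zero_of_imp [CompleteSpace E] (hf : IsSimpleOver f S y)
    (hF : IsSimpleOver F S y) (hyS : y.1 ∈ S) (hfF : ∀ v, f v = 0 → F v = 0) (hfy : f y = 0) :
    ∀ᶠ v in 𝓝[Prod.fst ⁻¹' S ∩ {v | F v = 0}] y, f v = 0 := by
  obtain ⟨ρ, hρ, hfρ⟩ := hf.exists_tendsto hyS hfy
  obtain ⟨ρ', -, hFρ'⟩ := hF.exists_tendsto hyS (hfF y hfy)
  have hgraph : Tendsto (fun x ↦ (x, ρ x)) (𝓝[S] y.1) (𝓝[Prod.fst ⁻¹' S] y) :=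
    tendsto_nhdsWithin_iff.2 ⟨(tendsto_id.prodMk_nhds hρ).mono_left nhdsWithin_le_nhds,
      self_mem_nhdsWithin⟩
  have hρρ' : ∀ᶠ x in 𝓝[S] y.1, ρ' x = ρ x := by
    filter_upwards [hgraph.eventually hfρ, hgraph.eventually hFρ'] with x hfx hFx
    exact hFx.1 (hfF _ (hfx.2 rfl))
  have hfst : Tendsto Prod.fst (𝓝[Prod.fst ⁻¹' S] y) (𝓝[S] y.1) :=
    continuous_fst.continuousWithinAt.tendsto_nhdsWithin (Set.mapsTo_preimage _ _)
  rw [nhdsWithin_inter', eventually_inf_principal]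
  filter_upwards [hfρ, hFρ', hfst.eventually hρρ'] with v hfv hFv hv hFv0
  rw [hfv, ← hv]
  exact hFv.1 hFv0

lemma isAnalyticSubmanifoldAt {k : ℕ} (hF : IsSimpleOver F S y)
    (hS : IsAnalyticSubmanifoldAt k S y.1) (hFy : F y = 0) :
    IsAnalyticSubmanifoldAt (k + 1) (Prod.fst ⁻¹' S ∩ {v | F v = 0}) y := by
  obtain ⟨Q, hQ, hzeros, hdQ⟩ := hF
  refine (hS.inter_zeros hQ ((hzeros.self_of_nhdsWithin hS.mem).2 hFy) (hdQ hFy)).congr ?_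
  rw [eventuallyEq_set]
  filter_upwards [eventually_nhdsWithin_iff.1 hzeros] with v hv
  exact and_congr_right fun hvS ↦ hv hvS

end IsSimpleOver

end SimpleEquations

section Stratifications

variable {E E' : Type*} [NormedAddCommGroup E] [NormedSpace ℝ E]
  [NormedAddCommGroup E'] [NormedSpace ℝ E'] {ι : Type*}

/-- Near `x`, the level sets of `σ` behave as the strata of an analytic stratification in which
`σ y` is the codimension of the stratum of `y`. -/
structure IsStratificationAt (σ : E → ℕ) (x : E) : Prop where
  eventually_le : ∀ᶠ y in 𝓝 x, σ y ≤ σ x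
  isAnalyticSubmanifoldAt : IsAnalyticSubmanifoldAt (σ x) (σ ⁻¹' {σ x}) x

/-- Near `x`, the zero sets of the functions `f i` are unions of strata of the stratification with
codimension function `σ`. -/
structure IsAdaptedAt (f : ι → E → ℝ) (σ : E → ℕ) (x : E) : Prop
    extends IsStratificationAt σ x where
  eventually_eq_zero : ∀ i, f i x = 0 → ∀ᶠ y in 𝓝[σ ⁻¹' {σ x}] x, f i y = 0

lemma IsStratificationAt.preimage {σ : E → ℕ} {g : E' → E} {x : E'}
    (hσ : IsStratificationAt σ (g x)) (hg : AnalyticAt ℝ g x)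
    (hsurj : Function.Surjective (fderiv ℝ g x)) : IsStratificationAt (σ ∘ g) x where
  eventually_le := hg.continuousAt.eventually hσ.eventually_le
  isAnalyticSubmanifoldAt :=
    IsAnalyticSubmanifoldAt.preimage (g := g) hg hsurj hσ.isAnalyticSubmanifoldAt

lemma IsStratificationAt.congr {σ τ : E → ℕ} {x : E} (hσ : IsStratificationAt σ x)
    (hστ : σ =ᶠ[𝓝 x] τ) : IsStratificationAt τ x where
  eventually_le := by
    filter_upwards [hσ.eventually_le, hστ] with y hy hστy
    rwa [← hστy, ← hστ.self_of_nhds]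
  isAnalyticSubmanifoldAt := hστ.self_of_nhds ▸ hσ.isAnalyticSubmanifoldAt.congr
    (hστ.mono fun y hy ↦ congrArg (· = σ x) hy)

namespace IsAdaptedAt

lemma preimage {f : ι → E → ℝ} {σ : E → ℕ} {g : E' → E} {x : E'} (hσ : IsAdaptedAt f σ (g x))
    (hg : AnalyticAt ℝ g x) (hsurj : Function.Surjective (fderiv ℝ g x)) :
    IsAdaptedAt (fun i ↦ f i ∘ g) (σ ∘ g) x where
  toIsStratificationAt := hσ.toIsStratificationAt.preimage hg hsurj
  eventually_eq_zero i hi := (hg.continuousAt.continuousWithinAt.tendsto_nhdsWithin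
    (Set.mapsTo_preimage _ _)).eventually (hσ.eventually_eq_zero i hi)

lemma of_subsingleton [Subsingleton E] (f : ι → E → ℝ) (x : E) : IsAdaptedAt f 0 x where
  eventually_le := .of_forall fun _ ↦ le_rfl
  isAnalyticSubmanifoldAt := .of_mem_nhds (by simp)
  eventually_eq_zero i hi := .of_forall fun y ↦ Subsingleton.elim x y ▸ hi

lemma of_subtype {f : ι → E → ℝ} {σ : E → ℕ} {x : E} {p : ι → Prop}
    (hσ : IsAdaptedAt (fun i : {i // p i} ↦ f i) σ x)
    (hf : ∀ i, ¬ p i → ∀ᶠ y in 𝓝 x, f i y = 0) : IsAdaptedAt f σ x where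
  toIsStratificationAt := hσ.toIsStratificationAt
  eventually_eq_zero i hi := by
    by_cases hpi : p i
    · exact hσ.eventually_eq_zero ⟨i, hpi⟩ hi
    · exact (hf i hpi).filter_mono nhdsWithin_le_nhds

end IsAdaptedAt

lemma exists_isAdaptedAt_of_comp_equiv (e : E ≃L[ℝ] E') {f : ι → E' → ℝ}
    (h : ∃ σ : E → ℕ, ∀ᶠ x in 𝓝 0, IsAdaptedAt (fun i ↦ f i ∘ e) σ x) :
    ∃ σ : E' → ℕ, ∀ᶠ x in 𝓝 0, IsAdaptedAt f σ x := by
  obtain ⟨σ, hσ⟩ := h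
  refine ⟨σ ∘ e.symm, ?_⟩
  have he : Tendsto e.symm (𝓝 0) (𝓝 0) := by simpa using e.symm.continuous.tendsto 0
  filter_upwards [he.eventually hσ] with x hx
  have hsurj : Function.Surjective (fderiv ℝ e.symm x) := by
    rw [e.symm.fderiv]
    exact e.symm.surjective
  simpa [Function.comp_assoc] using hx.preimage (e.symm.analyticAt x) hsurj

open Classical in
/-- The codimension function on `E × ℝ` of the stratification into the sets `{F = 0}` and
`{F ≠ 0}` over the strata of `σ`. -/
noncomputable def codimOver (σ : E → ℕ) (F : E × ℝ → ℝ) (y : E × ℝ) : ℕ :=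
  if F y = 0 then σ y.1 + 1 else σ y.1

section CodimOver

variable {σ : E → ℕ} {F : E × ℝ → ℝ} {y : E × ℝ}

lemma isStratificationAt_codimOver_of_ne (hσ : IsStratificationAt σ y.1)
    (hFy : ∀ᶠ v in 𝓝 y, F v ≠ 0) : IsStratificationAt (codimOver σ F) y := by
  have hfst : Function.Surjective (fderiv ℝ Prod.fst y : E × ℝ →L[ℝ] E) := by
    rw [fderiv_fst]
    exact Prod.fst_surjective
  refine (hσ.preimage analyticAt_fst hfst).congr ?_
  filter_upwards [hFy] with v hv using (if_neg hv).symm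

lemma preimage_codimOver_eventuallyEq (hσ : IsStratificationAt σ y.1) (hFy : F y = 0) :
    codimOver σ F ⁻¹' {codimOver σ F y} =ᶠ[𝓝 y]
      (Prod.fst ⁻¹' (σ ⁻¹' {σ y.1}) ∩ {v | F v = 0} : Set (E × ℝ)) := by
  rw [eventuallyEq_set]
  filter_upwards [(continuous_fst.tendsto y).eventually hσ.eventually_le] with v hv
  by_cases hFv : F v = 0
  · simp [codimOver, hFy, hFv]
  · simp only [codimOver, hFy, hFv, Set.mem_preimage, Set.mem_inter_iff, Set.mem_singleton_iff,
      Set.mem_ofPred_eq, if_true, if_false, and_false, iff_false]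
    lia

lemma isStratificationAt_codimOver_of_eq (hσ : IsStratificationAt σ y.1) (hFy : F y = 0)
    (hF : IsSimpleOver F (σ ⁻¹' {σ y.1}) y) : IsStratificationAt (codimOver σ F) y where
  eventually_le := by
    filter_upwards [(continuous_fst.tendsto y).eventually hσ.eventually_le] with v hv
    simp only [codimOver, hFy, if_true]
    split_ifs <;> lia
  isAnalyticSubmanifoldAt := by
    rw [show codimOver σ F y = σ y.1 + 1 from if_pos hFy]
    refine (hF.isAnalyticSubmanifoldAt hσ.isAnalyticSubmanifoldAt hFy).congr ?_
    rw [← show codimOver σ F y = σ y.1 + 1 from if_pos hFy]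
    exact (preimage_codimOver_eventuallyEq hσ hFy).symm

lemma isAdaptedAt_codimOver [CompleteSpace E] {f : ι → E × ℝ → ℝ}
    (hσ : IsStratificationAt σ y.1) (hFc : ContinuousAt F y)
    (hF : IsSimpleOver F (σ ⁻¹' {σ y.1}) y) (hf : ∀ i, IsSimpleOver (f i) (σ ⁻¹' {σ y.1}) y)
    (hfF : ∀ i v, f i v = 0 → F v = 0) : IsAdaptedAt f (codimOver σ F) y := by
  by_cases hFy : F y = 0
  · refine ⟨isStratificationAt_codimOver_of_eq hσ hFy hF, fun i hi ↦ ?_⟩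
    rw [nhdsWithin_eq_iff_eventuallyEq.2 (preimage_codimOver_eventuallyEq hσ hFy)]
    exact (hf i).eventually_eq_zero_of_imp hF rfl (hfF i) hi
  · exact ⟨isStratificationAt_codimOver_of_ne hσ (hFc.eventually_ne hFy),
      fun i hi ↦ absurd (hfF i y hi) hFy⟩

end CodimOver

/-- Every finite family of functions analytic at the origin of `E` has an adapted stratification
near the origin. -/
def HasAdaptedStratifications (E : Type*) [NormedAddCommGroup E] [NormedSpace ℝ E] : Prop :=
  ∀ (ι : Type) [Finite ι] (f : ι → E → ℝ), (∀ i, AnalyticAt ℝ (f i) 0) →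
    ∃ σ : E → ℕ, ∀ᶠ x in 𝓝 0, IsAdaptedAt f σ x

namespace HasAdaptedStratifications

lemma of_equiv (hE : HasAdaptedStratifications E) (e : E ≃L[ℝ] E') :
    HasAdaptedStratifications E' := fun _ _ f hf ↦
  exists_isAdaptedAt_of_comp_equiv e <| hE _ (fun i ↦ f i ∘ e) fun i ↦
    AnalyticAt.comp ((map_zero e).symm ▸ hf i) (e.analyticAt 0)

variable {ι : Type} [Finite ι] {f : ι → E × ℝ → ℝ} {F : E × ℝ → ℝ}

lemma exists_isSimpleOver (hE : HasAdaptedStratifications E) (hf : ∀ i, AnalyticAt ℝ (f i) 0)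
    (hne : ∀ i, ∃ᶠ t in 𝓝 0, f i (0, t) ≠ 0) :
    ∃ σ : E → ℕ, ∀ᶠ y in 𝓝 (0 : E × ℝ), IsStratificationAt σ y.1 ∧
      ∀ i, IsSimpleOver (f i) (σ ⁻¹' {σ y.1}) y := by
  choose m D hD hsimple using fun i ↦ exists_discriminants (hf i) (hne i)
  obtain ⟨σ, hσ⟩ := hE _ (fun p : Σ i, Fin (m i + 1) ↦ D p.1 p.2) fun p ↦ hD p.1 p.2
  refine ⟨σ, ?_⟩
  filter_upwards [(continuous_fst.tendsto (0 : E × ℝ)).eventually hσ, eventually_all.2 hsimple]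
    with y hy hsimple
  exact ⟨hy.toIsStratificationAt, fun i ↦ hsimple i _ rfl fun s ↦ hy.eventually_eq_zero ⟨i, s⟩⟩

lemma exists_isAdaptedAt_of_regular [CompleteSpace E] (hE : HasAdaptedStratifications E)
    (hf : ∀ i, AnalyticAt ℝ (f i) 0) (hF : AnalyticAt ℝ F 0)
    (hfF : ∀ i y, f i y = 0 → F y = 0) (hne : ∃ᶠ t in 𝓝 0, F (0, t) ≠ 0) :
    ∃ σ : E × ℝ → ℕ, ∀ᶠ y in 𝓝 0, IsAdaptedAt f σ y := by
  obtain ⟨σ, hσ⟩ := hE.exists_isSimpleOver (f := fun i : Option ι ↦ i.elim F f)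
    (Option.forall.2 ⟨hF, hf⟩)
    (Option.forall.2 ⟨hne, fun i ↦ hne.mono fun t ↦ mt (hfF i (0, t))⟩)
  refine ⟨codimOver σ F, ?_⟩
  filter_upwards [hσ, hF.eventually_analyticAt] with y ⟨hσy, hsimple⟩ hFy
  exact isAdaptedAt_codimOver hσy hFy.continuousAt (hsimple none) (fun i ↦ hsimple (some i)) hfF

lemma exists_isAdaptedAt_of_ne_zero [CompleteSpace E] (hE : HasAdaptedStratifications E)
    (hf : ∀ i, AnalyticAt ℝ (f i) 0) (hne : ∀ i, ∃ᶠ y in 𝓝 0, f i y ≠ 0) :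
    ∃ σ : E × ℝ → ℕ, ∀ᶠ y in 𝓝 0, IsAdaptedAt f σ y := by
  have := Fintype.ofFinite ι
  have hF := Finset.univ.analyticAt_fun_prod fun i _ ↦ hf i
  obtain ⟨p, hp, hFp⟩ := exists_frequently_smul_ne_zero hF
    (frequently_prod_ne_zero Finset.univ hf hne)
  obtain ⟨e, he⟩ := SeparatingDual.exists_continuousLinearEquiv_apply_eq (R := ℝ)
    (x := ((0, 1) : E × ℝ)) (y := p) (by simp) hp
  have hfe (i) : AnalyticAt ℝ (f i ∘ e) 0 :=
    AnalyticAt.comp ((map_zero e).symm ▸ hf i) (e.analyticAt 0)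
  have het (t : ℝ) : e (0, t) = t • p := by
    rw [← he, ← map_smul]
    simp
  refine exists_isAdaptedAt_of_comp_equiv e <| hE.exists_isAdaptedAt_of_regular hfe
    (F := fun y ↦ ∏ i, (f i ∘ e) y) (Finset.univ.analyticAt_fun_prod fun i _ ↦ hfe i)
    (fun i y hi ↦ Finset.prod_eq_zero (Finset.mem_univ i) hi) ?_
  simpa only [Function.comp_apply, het] using hFp

lemma prod_real [CompleteSpace E] (hE : HasAdaptedStratifications E) :
    HasAdaptedStratifications (E × ℝ) := by
  intro ι _ f hf
  obtain ⟨σ, hσ⟩ := hE.exists_isAdaptedAt_of_ne_zero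
    (f := fun i : {i // ∃ᶠ y in 𝓝 0, f i y ≠ 0} ↦ f i) (fun i ↦ hf i) fun i ↦ i.2
  have hzero : ∀ᶠ y in 𝓝 0, ∀ i, ¬ (∃ᶠ v in 𝓝 0, f i v ≠ 0) → ∀ᶠ v in 𝓝 y, f i v = 0 := by
    refine eventually_all.2 fun i ↦ ?_
    simp only [not_frequently, not_not, eventually_imp_distrib_left]
    exact Eventually.eventually_nhds
  exact ⟨σ, by filter_upwards [hσ, hzero] with y hy hzero using hy.of_subtype hzero⟩

lemma fin_fun (n : ℕ) : HasAdaptedStratifications (Fin n → ℝ) := by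
  induction n with
  | zero => exact fun _ _ f _ ↦ ⟨0, .of_forall fun x ↦ .of_subsingleton f x⟩
  | succ n ih => exact ih.prod_real.of_equiv (ContinuousLinearEquiv.ofFinrankEq (by simp))

lemma of_finiteDimensional [FiniteDimensional ℝ E] : HasAdaptedStratifications E :=
  (fin_fun (Module.finrank ℝ E)).of_equiv (ContinuousLinearEquiv.ofFinrankEq (by simp))

end HasAdaptedStratifications

lemma exists_isAdaptedAt [FiniteDimensional ℝ E] {ι : Type} [Finite ι] {f : ι → E → ℝ} {x₀ : E}
    (hf : ∀ i, AnalyticAt ℝ (f i) x₀) : ∃ σ : E → ℕ, ∀ᶠ x in 𝓝 x₀, IsAdaptedAt f σ x := by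
  obtain ⟨σ, hσ⟩ := HasAdaptedStratifications.of_finiteDimensional _ (fun i x ↦ f i (x + x₀))
    fun i ↦ AnalyticAt.fun_comp (by simpa using hf i) (by fun_prop)
  refine ⟨fun x ↦ σ (x - x₀), ?_⟩
  have hsub : Tendsto (· - x₀) (𝓝 x₀) (𝓝 0) :=
    sub_self x₀ ▸ (continuous_sub_right x₀).tendsto x₀
  filter_upwards [hsub.eventually hσ] with x hx
  have hsurj : Function.Surjective (fderiv ℝ (· - x₀) x) := by
    rw [fderiv_sub_const, fderiv_fun_id]
    exact Function.surjective_id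
  simpa [Function.comp_def] using hx.preimage (g := (· - x₀)) (by fun_prop) hsurj

end Stratifications

section Decomposition

variable {E : Type*} [NormedAddCommGroup E] [NormedSpace ℝ E] {ι : Type*}
  {f : ι → E → ℝ} {σ : E → ℕ} {x : E} {i : ι}

lemma IsAdaptedAt.inter_zeros_eventuallyEq (hσ : IsAdaptedAt f σ x) (hx : f i x = 0) :
    ({y | f i y = 0} ∩ σ ⁻¹' {σ x} : Set E) =ᶠ[𝓝 x] σ ⁻¹' {σ x} :=
  inter_eventuallyEq_right.2 (eventually_nhdsWithin_iff.1 (hσ.eventually_eq_zero i hx))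

lemma IsAdaptedAt.pos_of_frequently_ne_zero (hσ : IsAdaptedAt f σ x) (hx : f i x = 0)
    (hne : ∃ᶠ y in 𝓝 x, f i y ≠ 0) : 0 < σ x := by
  refine Nat.pos_of_ne_zero fun hσx ↦ hne ?_
  filter_upwards [hσ.eventually_le, eventually_nhdsWithin_iff.1 (hσ.eventually_eq_zero i hx)]
    with y hle hzero
  exact not_not.2 (hzero (hle.antisymm (hσx ▸ Nat.zero_le _)))

end Decomposition

end Lojasiewicz

open Filter Topology Lojasiewicz in
theorem lojasiewicz_structure_theorem_general {E : Type*} [NormedAddCommGroup E]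
    [NormedSpace ℝ E] [FiniteDimensional ℝ E] {d : ℕ} (hd : Module.finrank ℝ E = d) {f : E → ℝ}
    {x₀ : E} (hf : AnalyticAt ℝ f x₀) (hne : ∃ᶠ x in 𝓝 x₀, f x ≠ 0) :
    ∃ Ω : Set E, IsOpen Ω ∧ x₀ ∈ Ω ∧ ∃ M : Fin d → Set E,
      {x | f x = 0} ∩ Ω = ⋃ d', M d' ∧
        ∀ d', ∀ x ∈ M d', IsAnalyticallyParametrizedAt d' (d - d') (M d') x := by
  obtain ⟨σ, hσ⟩ := exists_isAdaptedAt fun _ : Unit ↦ hf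
  obtain ⟨Ω, hΩσ, hΩ, hx₀⟩ := mem_nhds_iff.1
    (hσ.and (eventually_frequently_ne_zero hf hne))
  refine ⟨Ω, hΩ, hx₀, fun d' ↦ {x | f x = 0} ∩ σ ⁻¹' {d - d'.1} ∩ Ω, ?_, ?_⟩
  · ext x
    simp only [Set.mem_iUnion, Set.mem_inter_iff, Set.mem_ofPred_eq, Set.mem_preimage,
      Set.mem_singleton_iff]
    refine ⟨fun ⟨hfx, hx⟩ ↦ ?_, fun ⟨_, ⟨hfx, _⟩, hx⟩ ↦ ⟨hfx, hx⟩⟩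
    have hpos := (hΩσ hx).1.pos_of_frequently_ne_zero (i := ()) hfx (hΩσ hx).2
    have hle := hd ▸ (hΩσ hx).1.isAnalyticSubmanifoldAt.le_finrank
    exact ⟨⟨d - σ x, by omega⟩, ⟨hfx, (Nat.sub_sub_self hle).symm⟩, hx⟩
  · rintro d' x ⟨⟨hfx, hσx : σ x = d - d'⟩, hx⟩
    refine IsAnalyticSubmanifoldAt.isAnalyticallyParametrizedAt
      (M := {y | f y = 0} ∩ σ ⁻¹' {d - d'.1} ∩ Ω) (by omega) ?_
    rw [← hσx]
    have hΩx : ∀ᶠ y in 𝓝 x, y ∈ Ω := hΩ.mem_nhds hx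
    exact (hΩσ hx).1.isAnalyticSubmanifoldAt.congr <|
      ((inter_eventuallyEq_left.2 (hΩx.mono fun _ hy _ ↦ hy)).trans
        ((hΩσ hx).1.inter_zeros_eventuallyEq (i := ()) hfx)).symm

/-- Łojasiewicz structure theorem, local form: the zero set of a not
identically zero real analytic function `f : ℝ^d → ℝ` locally decomposes as a union of
pieces `M₀ ∪ ⋯ ∪ M_{d−1}`, each piece `M_{d'}` admitting, near each of its points, a real
analytic local parametrisation `φ : W → U` (a homeomorphism from an open neighbourhood `W`
of `0` in `ℝ^{d'} × ℝ^{d−d'}` onto an open neighbourhood `U`) with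
`M_{d'} ∩ U = {φ(τ,0) : (τ,0) ∈ W}`. -/
theorem lojasiewicz_structure_theorem (d : ℕ) (f : (Fin d → ℝ) → ℝ)
    (hf : ∀ x, AnalyticAt ℝ f x) (hne : ∃ x, f x ≠ 0) :
    ∀ x₀ ∈ {x : Fin d → ℝ | f x = 0},
      ∃ Ω : Set (Fin d → ℝ), IsOpen Ω ∧ x₀ ∈ Ω ∧
        ∃ M : Fin d → Set (Fin d → ℝ),
          ({x : Fin d → ℝ | f x = 0} ∩ Ω = ⋃ d' : Fin d, M d') ∧
          ∀ d' : Fin d, ∀ x ∈ M d',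
            ∃ (U : Set (Fin d → ℝ))
              (W : Set ((Fin (d' : ℕ) → ℝ) × (Fin (d - (d' : ℕ)) → ℝ)))
              (φ : (Fin (d' : ℕ) → ℝ) × (Fin (d - (d' : ℕ)) → ℝ) → (Fin d → ℝ)),
              IsOpen U ∧ x ∈ U ∧ IsOpen W ∧
              (0 : (Fin (d' : ℕ) → ℝ) × (Fin (d - (d' : ℕ)) → ℝ)) ∈ W ∧
              (∀ w ∈ W, AnalyticAt ℝ φ w) ∧
              (∃ h : W ≃ₜ U, ∀ w : W, (h w : Fin d → ℝ) = φ (w : _)) ∧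
              M d' ∩ U =
                {y : Fin d → ℝ | ∃ τ : Fin (d' : ℕ) → ℝ, (τ, 0) ∈ W ∧ φ (τ, 0) = y} := by
  refine fun x₀ _ ↦ lojasiewicz_structure_theorem_general (by simp) (hf x₀) fun hzero ↦ ?_
  obtain ⟨x, hx⟩ := hne
  exact hx <| congrFun (AnalyticOnNhd.eq_of_eventuallyEq (fun x _ ↦ hf x) analyticOnNhd_const
    (hzero.mono fun _ ↦ not_not.1)) x
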